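/- Let M : ℝ × E → (E →L[ℝ] E) be a C¹ field of linear maps and define its Lie derivative d_L M (t, x) := ∂M/∂t(t, x) + D_x M(t, x)(u(t, x)) + M(t, x) ∘ D_x u(t, x) − D_x u(t, x) ∘ M(t, x). Then d_L M ≡ 0 if and only if M(t, φ(t, X)) = F(t, X) ∘ M(0, X) ∘ F(t, X)⁻¹ for all (t, X); i.e. a mixed (1,1)-tensor field is moving with the fluid if and only if it is conjugate by F to a time-independent field on the reference space. -/

import Mathlib

noncomputable section

local notation "E3" => EuclideanSpace ℝ (Fin 3)

open Set Filter Topology MeasureTheory Function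

/-- Fencing estimate: an integral curve starting close to `γ` stays in a tube around `γ` on which
the vector field is Lipschitz, and separates from `γ` at most exponentially. -/
theorem norm_sub_le_of_lipschitz_tube {E : Type*} [NormedAddCommGroup E] [NormedSpace ℝ E]
    {v : ℝ → E → E} {γ η : ℝ → E} {a b r c K : ℝ} (hK : 0 ≤ K) (hc : 0 < c)
    (hγ : ∀ t, HasDerivAt γ (v t (γ t)) t) (hη : ∀ t, HasDerivAt η (v t (η t)) t)
    (hlip : ∀ t ∈ Icc a b, ∀ y, ‖y - γ t‖ ≤ r → ‖v t y - v t (γ t)‖ ≤ K * ‖y - γ t‖)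
    (ha : ‖η a - γ a‖ ≤ c) (hr : c * Real.exp ((K + 1) * (b - a)) ≤ r) :
    ∀ t ∈ Icc a b, ‖η t - γ t‖ ≤ c * Real.exp ((K + 1) * (b - a)) := by
  have hd : ∀ t, HasDerivAt (fun t => η t - γ t) (v t (η t) - v t (γ t)) t :=
    fun t => (hη t).sub (hγ t)
  have hB : ∀ t, HasDerivAt (fun t => c * Real.exp ((K + 1) * (t - a)))
      ((K + 1) * (c * Real.exp ((K + 1) * (t - a)))) t := fun t =>
    (((((hasDerivAt_id' t).sub_const a).const_mul (K + 1)).exp).const_mul c).congr_deriv (by ring)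
  have hmono : ∀ t ∈ Icc a b,
      c * Real.exp ((K + 1) * (t - a)) ≤ c * Real.exp ((K + 1) * (b - a)) := fun t ht => by
    have := ht.2
    gcongr
  intro t ht
  refine (image_norm_le_of_norm_deriv_right_lt_deriv_boundary
    (fun t _ => (hd t).continuousAt.continuousWithinAt)
    (fun t _ => (hd t).hasDerivWithinAt) (by simpa using ha) hB ?_ ht).trans (hmono t ht)
  intro x hx hxB
  have hxI := Ico_subset_Icc_self hx
  have h := hlip x hxI (η x) (hxB.le.trans ((hmono x hxI).trans hr))
  rw [hxB] at h
  have : 0 < c * Real.exp ((K + 1) * (x - a)) := by positivity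
  linarith

/-- A `C¹` time-dependent vector field is uniformly Lipschitz on a tube around a short piece of a
continuous curve. -/
theorem exists_lipschitz_tube {E : Type*} [NormedAddCommGroup E] [NormedSpace ℝ E]
    {u : ℝ → E → E} (hu : ContDiff ℝ 1 (uncurry u)) {γ : ℝ → E} (hγ : Continuous γ) (t₀ : ℝ) :
    ∃ a b r K : ℝ, a < t₀ ∧ t₀ < b ∧ 0 < r ∧ 0 ≤ K ∧
      ∀ t ∈ Icc a b, ∀ y, ‖y - γ t‖ ≤ r → ‖u t y - u t (γ t)‖ ≤ K * ‖y - γ t‖ := by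
  obtain ⟨K, s, hs, hK⟩ := (hu.contDiffAt (x := (t₀, γ t₀))).exists_lipschitzOnWith
  obtain ⟨ε, hε, hεs⟩ := Metric.mem_nhds_iff.1 hs
  obtain ⟨δ, hδ, hδγ⟩ := Metric.continuousAt_iff.1 (hγ.continuousAt (x := t₀)) (ε / 2)
    (half_pos hε)
  set d := min (δ / 2) (ε / 2) with hd
  have hd0 : 0 < d := by positivity
  have hdδ : d < δ := (min_le_left _ _).trans_lt (half_lt_self hδ)
  have hdε : d < ε := (min_le_right _ _).trans_lt (half_lt_self hε)
  refine ⟨t₀ - d, t₀ + d, ε / 4, K, by linarith, by linarith, by positivity, K.2, ?_⟩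
  intro t ht y hy
  have htd : dist t t₀ ≤ d := by
    rw [Real.dist_eq, abs_le]
    constructor <;> linarith [ht.1, ht.2]
  have hγt := hδγ (htd.trans_lt hdδ)
  have hyt : dist y (γ t) ≤ ε / 4 := by rwa [dist_eq_norm]
  have mem : ∀ z, dist z (γ t₀) < ε → (t, z) ∈ s := fun z hz =>
    hεs (by simpa [Metric.mem_ball, Prod.dist_eq] using ⟨htd.trans_lt hdε, hz⟩)
  have h := hK.dist_le_mul (t, y) (mem y (by linarith [dist_triangle y (γ t) (γ t₀)]))
    (t, γ t) (mem _ (by linarith))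
  simpa [Prod.dist_eq, dist_eq_norm] using h

theorem hasFDerivAt_slice {E G : Type*} [NormedAddCommGroup E] [NormedSpace ℝ E]
    [NormedAddCommGroup G] [NormedSpace ℝ G] {f : ℝ → E → G} (hf : ContDiff ℝ 1 (uncurry f))
    (t : ℝ) (x : E) :
    HasFDerivAt (f t) ((fderiv ℝ (uncurry f) (t, x)).comp (.inr ℝ ℝ E)) x :=
  ((hf.differentiable one_ne_zero (t, x)).hasFDerivAt).comp x (hasFDerivAt_prodMk_right t x)

theorem continuous_fderiv_slice {E G : Type*} [NormedAddCommGroup E] [NormedSpace ℝ E]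
    [NormedAddCommGroup G] [NormedSpace ℝ G] {f : ℝ → E → G} (hf : ContDiff ℝ 1 (uncurry f))
    {γ : ℝ → E} (hγ : Continuous γ) : Continuous fun t => fderiv ℝ (f t) (γ t) := by
  simp only [fun t => (hasFDerivAt_slice hf t (γ t)).fderiv]
  exact ((hf.continuous_fderiv one_ne_zero).comp (continuous_id.prodMk hγ)).clm_comp
    continuous_const

/-- Material derivative of a `C¹` time-dependent field along a differentiable curve. -/
theorem hasDerivAt_along_curve {E G : Type*} [NormedAddCommGroup E] [NormedSpace ℝ E]
    [NormedAddCommGroup G] [NormedSpace ℝ G] {f : ℝ → E → G} (hf : ContDiff ℝ 1 (uncurry f))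
    {γ : ℝ → E} {γ' : E} {t : ℝ} (hγ : HasDerivAt γ γ' t) :
    HasDerivAt (fun τ => f τ (γ τ))
      (deriv (fun τ => f τ (γ t)) t + fderiv ℝ (f t) (γ t) γ') t := by
  have hd := (hf.differentiable one_ne_zero (t, γ t)).hasFDerivAt
  have h₁ : HasDerivAt (fun τ => f τ (γ t)) (fderiv ℝ (uncurry f) (t, γ t) (1, 0)) t :=
    hd.comp_hasDerivAt (f := fun τ => (τ, γ t)) t ((hasDerivAt_id t).prodMk (hasDerivAt_const t (γ t)))
  have h₂ : HasDerivAt (fun τ => f τ (γ τ)) (fderiv ℝ (uncurry f) (t, γ t) (1, γ')) t :=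
    hd.comp_hasDerivAt (f := fun τ => (τ, γ τ)) t ((hasDerivAt_id t).prodMk hγ)
  rw [h₁.deriv, (hasFDerivAt_slice hf t (γ t)).fderiv]
  convert h₂ using 1
  simp [← map_add]

/-- The variational equation for a flow that is only assumed to be differentiable in space at each
fixed time, tested against a fixed direction `h`. -/
theorem hasDerivAt_fderiv_flow_apply {E : Type*} [NormedAddCommGroup E] [NormedSpace ℝ E]
    [CompleteSpace E] {u φ : ℝ → E → E} (hu : ContDiff ℝ 1 (uncurry u))
    (hφt : ∀ t X, HasDerivAt (fun τ => φ τ X) (u t (φ t X)) t)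
    (hφd : ∀ t, Differentiable ℝ (φ t)) (t₀ : ℝ) (X h : E) :
    HasDerivAt (fun t => fderiv ℝ (φ t) X h)
      (fderiv ℝ (u t₀) (φ t₀ X) (fderiv ℝ (φ t₀) X h)) t₀ := by
  have hφc : ∀ Y, Continuous fun τ => φ τ Y :=
    fun Y => continuous_iff_continuousAt.2 fun t => (hφt t Y).continuousAt
  have huc : ∀ Y, Continuous fun τ => u τ (φ τ Y) :=
    fun Y => hu.continuous.comp (continuous_id.prodMk (hφc Y))
  obtain ⟨a, b, r, K, hat, htb, hr, hK, hlip⟩ := exists_lipschitz_tube hu (hφc X) t₀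
  have hline : HasDerivAt (fun s : ℝ => X + s • h) h 0 := by
    simpa using ((hasDerivAt_id (0 : ℝ)).smul_const h).const_add X
  have hφs : ∀ t, HasDerivAt (fun s : ℝ => φ t (X + s • h)) (fderiv ℝ (φ t) X h) 0 := fun t => by
    have h₁ : HasFDerivAt (φ t) (fderiv ℝ (φ t) X) (X + (0 : ℝ) • h) := by
      simpa using (hφd t X).hasFDerivAt
    exact h₁.comp_hasDerivAt (0 : ℝ) hline
  have hus : ∀ t, HasDerivAt (fun s : ℝ => u t (φ t (X + s • h)))
      (fderiv ℝ (u t) (φ t X) (fderiv ℝ (φ t) X h)) 0 := fun t => by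
    have h₁ : HasFDerivAt (u t) (fderiv ℝ (u t) (φ t X)) (φ t (X + (0 : ℝ) • h)) := by
      simpa using (hasFDerivAt_slice hu t (φ t X)).differentiableAt.hasFDerivAt
    exact h₁.comp_hasDerivAt (0 : ℝ) (hφs t)
  have hφlim : ∀ t, Tendsto (fun s : ℝ => s⁻¹ • (φ t (X + s • h) - φ t X)) (𝓝[≠] 0)
      (𝓝 (fderiv ℝ (φ t) X h)) := fun t => by
    simpa using (hasDerivAt_iff_tendsto_slope_zero.1 (hφs t))
  have hulim : ∀ t, Tendsto (fun s : ℝ => s⁻¹ • (u t (φ t (X + s • h)) - u t (φ t X))) (𝓝[≠] 0)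
      (𝓝 (fderiv ℝ (u t) (φ t X) (fderiv ℝ (φ t) X h))) := fun t => by
    simpa using (hasDerivAt_iff_tendsto_slope_zero.1 (hus t))
  set D := Real.exp ((K + 1) * (b - a)) with hD
  have hD0 : 0 < D := Real.exp_pos _
  set C := ‖fderiv ℝ (φ a) X h‖ + 1 with hC
  have hC0 : 0 < C := by positivity
  -- the difference quotients of the velocity are uniformly bounded
  have hbound : ∀ᶠ s : ℝ in 𝓝[≠] 0, ∀ t ∈ Icc a b,
      ‖s⁻¹ • (u t (φ t (X + s • h)) - u t (φ t X))‖ ≤ K * (C * D) := by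
    have h₁ : ∀ᶠ s : ℝ in 𝓝[≠] 0, ‖s⁻¹ • (φ a (X + s • h) - φ a X)‖ < C :=
      (hφlim a).norm.eventually (gt_mem_nhds (lt_add_one _))
    have h₂ : ∀ᶠ s : ℝ in 𝓝[≠] 0, C * |s| * D < r := by
      have : Tendsto (fun s : ℝ => C * |s| * D) (𝓝 0) (𝓝 (C * |0| * D)) :=
        (by fun_prop : Continuous fun s : ℝ => C * |s| * D).tendsto 0
      exact (this.mono_left nhdsWithin_le_nhds).eventually (gt_mem_nhds (by simpa using hr))
    filter_upwards [h₁, h₂, self_mem_nhdsWithin] with s hs₁ hs₂ hs₀ t ht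
    have hs : 0 < |s| := abs_pos.2 hs₀
    rw [norm_smul, norm_inv, Real.norm_eq_abs, inv_mul_lt_iff₀ hs] at hs₁
    have h₃ := norm_sub_le_of_lipschitz_tube hK (by positivity : 0 < C * |s|)
      (fun t => hφt t X) (fun t => hφt t (X + s • h)) hlip (by linarith) hs₂.le t ht
    have h₄ := hlip t ht _ (h₃.trans hs₂.le)
    rw [norm_smul, norm_inv, Real.norm_eq_abs, inv_mul_le_iff₀ hs]
    calc _ ≤ K * ‖φ t (X + s • h) - φ t X‖ := h₄
      _ ≤ K * (C * |s| * D) := by gcongr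
      _ = _ := by ring
  have hg_bound : ∀ t ∈ Icc a b,
      ‖fderiv ℝ (u t) (φ t X) (fderiv ℝ (φ t) X h)‖ ≤ K * (C * D) := fun t ht =>
    le_of_tendsto (hulim t).norm (hbound.mono fun s hs => hs t ht)
  have hint : ∀ t₁ ∈ Icc a b, ∀ t₂ ∈ Icc a b,
      ∫ τ in t₁..t₂, fderiv ℝ (u τ) (φ τ X) (fderiv ℝ (φ τ) X h)
        = fderiv ℝ (φ t₂) X h - fderiv ℝ (φ t₁) X h := by
    intro t₁ ht₁ t₂ ht₂
    have hsub : uIoc t₁ t₂ ⊆ Icc a b := uIoc_subset_uIcc.trans (uIcc_subset_Icc ht₁ ht₂)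
    have hcont : ∀ s : ℝ, Continuous fun τ => s⁻¹ • (u τ (φ τ (X + s • h)) - u τ (φ τ X)) :=
      fun s => ((huc _).sub (huc _)).const_smul _
    have hlim := intervalIntegral.tendsto_integral_filter_of_dominated_convergence
      (a := t₁) (b := t₂) (μ := volume) (l := 𝓝[≠] (0 : ℝ))
      (F := fun s τ => s⁻¹ • (u τ (φ τ (X + s • h)) - u τ (φ τ X)))
      (fun _ => K * (C * D)) (.of_forall fun s => (hcont s).aestronglyMeasurable)
      (hbound.mono fun s hs => .of_forall fun τ hτ => hs τ (hsub hτ))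
      intervalIntegrable_const (.of_forall fun τ _ => hulim τ)
    refine tendsto_nhds_unique hlim (((hφlim t₂).sub (hφlim t₁)).congr fun s => ?_)
    exact (intervalIntegral.integral_eq_sub_of_hasDerivAt
      (fun τ _ => ((hφt τ (X + s • h)).sub (hφt τ X)).const_smul s⁻¹)
      ((hcont s).intervalIntegrable _ _)).symm
  have hFcont : ContinuousOn (fun t => fderiv ℝ (φ t) X h) (Icc a b) := by
    refine (LipschitzOnWith.of_dist_le_mul (K := ⟨K * (C * D), by positivity⟩)
      fun t₂ ht₂ t₁ ht₁ => ?_).continuousOn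
    rw [dist_eq_norm, ← hint t₁ ht₁ t₂ ht₂, Real.dist_eq]
    exact intervalIntegral.norm_integral_le_of_norm_le_const fun τ hτ =>
      hg_bound τ ((uIoc_subset_uIcc.trans (uIcc_subset_Icc ht₁ ht₂)) hτ)
  have hgcont : ContinuousOn (fun t => fderiv ℝ (u t) (φ t X) (fderiv ℝ (φ t) X h)) (Icc a b) :=
    (continuous_fderiv_slice hu (hφc X)).continuousOn.clm_apply hFcont
  have hnhds : Icc a b ∈ 𝓝 t₀ := Icc_mem_nhds hat htb
  have haI : a ∈ Icc a b := ⟨le_rfl, (hat.trans htb).le⟩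
  have hderiv := intervalIntegral.integral_hasDerivAt_right
    ((hgcont.mono (uIcc_subset_Icc haI ⟨hat.le, htb.le⟩)).intervalIntegrable (μ := volume))
    ((hgcont.mono Ioo_subset_Icc_self).stronglyMeasurableAtFilter isOpen_Ioo t₀ ⟨hat, htb⟩)
    (hgcont.continuousAt hnhds)
  refine (hderiv.add_const (fderiv ℝ (φ a) X h)).congr_of_eventuallyEq ?_
  filter_upwards [hnhds] with t ht
  rw [hint a haI t ht, sub_add_cancel]

/-- In finite dimension, a family of linear maps is differentiable if it is so pointwise. -/
theorem hasDerivAt_clm_of_forall_apply {E G : Type*} [NormedAddCommGroup E] [NormedSpace ℝ E]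
    [FiniteDimensional ℝ E] [NormedAddCommGroup G] [NormedSpace ℝ G] {A : ℝ → E →L[ℝ] G}
    {A' : E →L[ℝ] G} {t : ℝ} (hA : ∀ x, HasDerivAt (fun τ => A τ x) (A' x) t) :
    HasDerivAt A A' t := by
  have b := Module.finBasis ℝ E
  have key : ∀ L : E →L[ℝ] G, L = ∑ i,
      ContinuousLinearMap.smulRightL ℝ E G (b.coord i).toContinuousLinearMap (L (b i)) := fun L => by
    ext x
    conv_lhs => rw [← b.sum_repr x, map_sum]
    simp
  rw [key A', funext fun τ => key (A τ)]
  exact HasDerivAt.fun_sum fun i _ =>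
    (ContinuousLinearMap.hasFDerivAt _).comp_hasDerivAt t (hA (b i))

/-- The variational equation for a flow in finite dimension. -/
theorem hasDerivAt_fderiv_flow {E : Type*} [NormedAddCommGroup E] [NormedSpace ℝ E]
    [FiniteDimensional ℝ E] {u φ : ℝ → E → E} (hu : ContDiff ℝ 1 (uncurry u))
    (hφt : ∀ t X, HasDerivAt (fun τ => φ τ X) (u t (φ t X)) t)
    (hφd : ∀ t, Differentiable ℝ (φ t)) (t : ℝ) (X : E) :
    HasDerivAt (fun τ => fderiv ℝ (φ τ) X)
      ((fderiv ℝ (u t) (φ t X)).comp (fderiv ℝ (φ t) X)) t :=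
  have := FiniteDimensional.complete ℝ E
  hasDerivAt_clm_of_forall_apply fun h => hasDerivAt_fderiv_flow_apply hu hφt hφd t X h

/-- For a frame `P` in a Banach algebra transported by `P' = A P`, the pull-back `P⁻¹ N P` has
derivative `P⁻¹ (N' + N A - A N) P`. -/
theorem hasDerivAt_units_conj {R : Type*} [NormedRing R] [NormedAlgebra ℝ R]
    [HasSummableGeomSeries R] {P : ℝ → Rˣ} {N : ℝ → R} {A N' : R} {t : ℝ}
    (hP : HasDerivAt (fun τ => (P τ : R)) (A * P t) t) (hN : HasDerivAt N N' t) :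
    HasDerivAt (fun τ => ↑(P τ)⁻¹ * N τ * P τ)
      (↑(P t)⁻¹ * (N' + N t * A - A * N t) * P t) t := by
  have hinv : HasDerivAt (fun τ => (↑(P τ)⁻¹ : R)) (-(↑(P t)⁻¹ * A)) t := by
    have h := (hasFDerivAt_ringInverse (𝕜 := ℝ) (P t)).comp_hasDerivAt t hP
    simpa [Function.comp_def, mul_assoc] using h
  refine ((hinv.mul hN).mul hP).congr_deriv ?_
  simp only [Pi.mul_apply]
  noncomm_ring

/-- A mixed (1,1)-tensor field is moving with the fluid iff it is
conjugate by `F` to a time-independent field on the reference space. -/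
theorem mixed_tensor_moving_with_fluid_iff
    (u φ : ℝ → E3 → E3)
    (F : ℝ → E3 → (E3 ≃L[ℝ] E3))
    (hu : ContDiff ℝ (⊤ : ℕ∞) (Function.uncurry u))
    (hφ0 : ∀ X, φ 0 X = X)
    (hφt : ∀ t X, HasDerivAt (fun τ => φ τ X) (u t (φ t X)) t)
    (hφsmooth : ∀ t, ContDiff ℝ (⊤ : ℕ∞) (φ t))
    (hφbij : ∀ t, Function.Bijective (φ t))
    (hφinv : ∀ t, ContDiff ℝ (⊤ : ℕ∞) (Function.invFun (φ t)))
    (hF : ∀ t X, (F t X : E3 →L[ℝ] E3) = fderiv ℝ (φ t) X)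
    (M : ℝ → E3 → (E3 →L[ℝ] E3))
    (hM : ContDiff ℝ 1 (Function.uncurry M)) :
    (∀ t x, deriv (fun τ => M τ x) t + fderiv ℝ (M t) x (u t x)
        + (M t x).comp (fderiv ℝ (u t) x) - (fderiv ℝ (u t) x).comp (M t x) = 0) ↔
      (∀ t X, M t (φ t X)
          = ((F t X : E3 →L[ℝ] E3).comp (M 0 X)).comp ((F t X).symm : E3 →L[ℝ] E3)) := by
  have hu₁ : ContDiff ℝ 1 (uncurry u) := hu.of_le (by exact_mod_cast le_top)
  have hφd : ∀ t, Differentiable ℝ (φ t) := fun t => (hφsmooth t).differentiable (by simp)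
  let P : E3 → ℝ → (E3 →L[ℝ] E3)ˣ := fun X t => ContinuousLinearEquiv.toUnit (F t X)
  have hF0 : ∀ X, P X 0 = 1 := fun X => Units.ext <| by
    change (F 0 X : E3 →L[ℝ] E3) = 1
    rw [hF, show φ 0 = id from funext hφ0, fderiv_id]
    rfl
  have hP : ∀ t X, HasDerivAt (fun τ => (P X τ : E3 →L[ℝ] E3))
      (fderiv ℝ (u t) (φ t X) * P X t) t := fun t X => by
    have h := hasDerivAt_fderiv_flow hu₁ hφt hφd t X
    simp only [← hF] at h
    exact h
  have hpull := fun t X =>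
    hasDerivAt_units_conj (hP t X) (hasDerivAt_along_curve hM (hφt t X))
  constructor
  · intro hL t X
    have hzero : ∀ t, HasDerivAt (fun τ => (↑(P X τ)⁻¹ : E3 →L[ℝ] E3) * M τ (φ τ X) * P X τ) 0 t :=
      fun t => by
        have h := hpull t X
        rwa [show deriv (fun τ => M τ (φ t X)) t + fderiv ℝ (M t) (φ t X) (u t (φ t X))
          + M t (φ t X) * fderiv ℝ (u t) (φ t X) - fderiv ℝ (u t) (φ t X) * M t (φ t X) = 0
          from hL t (φ t X), mul_zero, zero_mul] at h
    have hconst := is_const_of_deriv_eq_zero (fun t => (hzero t).differentiableAt)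
      (fun t => (hzero t).deriv) t 0
    simp only [hF0, hφ0, inv_one, Units.val_one, one_mul, mul_one] at hconst
    change M t (φ t X) = (P X t : E3 →L[ℝ] E3) * M 0 X * ↑(P X t)⁻¹
    rw [← hconst]
    simp [mul_assoc]
  · intro hconj t x
    obtain ⟨X, rfl⟩ := (hφbij t).surjective x
    have hconst : (fun τ => (↑(P X τ)⁻¹ : E3 →L[ℝ] E3) * M τ (φ τ X) * P X τ)
        = fun _ => M 0 X := funext fun τ => by
      rw [show M τ (φ τ X) = (P X τ : E3 →L[ℝ] E3) * M 0 X * ↑(P X τ)⁻¹ from hconj τ X]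
      simp [mul_assoc]
    have h := hpull t X
    rw [hconst] at h
    have h₀ := h.unique (hasDerivAt_const t (M 0 X))
    rwa [Units.mul_left_eq_zero, Units.mul_right_eq_zero] at h₀
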